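/- arXiv:1712.00560 — 2 statements merged into one kernel-verified Lean document; each statement's English description precedes it below -/
import Mathlib

section
/- Every R⊥-category is Cauchy complete. Concretely: let (E, d) be an R⊥-category and let M, N : E → WithBot ℝ≥0∞ satisfy (right action) d Y X + M X ≤ M Y for all X, Y; (left action) N X + d X Y ≤ N Y for all X, Y; (unit) 0 ≤ ⨆ X, (N X + M X); and (counit) M X + N Y ≤ d X Y for all X, Y. Then there exists Z in E such that M Y = d Y Z for all Y in E, i.e. the Cauchy module M is represented by the object Z. -/
open scoped ENNReal

/-- Every `R⊥`-category is Cauchy complete: any left adjoint module `M` (with right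
adjoint `N`) on a causal space `(E, d)` is represented by some object `Z`. -/
theorem causal_space_cauchy_complete {E : Type*} (d : E → E → WithBot ℝ≥0∞)
    (hunit : ∀ X, 0 ≤ d X X)
    (hcomp : ∀ X Y Z, d X Y + d Y Z ≤ d X Z)
    (M N : E → WithBot ℝ≥0∞)
    (hM : ∀ X Y, d Y X + M X ≤ M Y)
    (hN : ∀ X Y, N X + d X Y ≤ N Y)
    (hη : 0 ≤ ⨆ X, (N X + M X))
    (hε : ∀ X Y, M X + N Y ≤ d X Y) :
    ∃ Z, ∀ Y, M Y = d Y Z := by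
  have h : ∃ Z, N Z + M Z ≠ ⊥ := by
    by_contra! h
    simp [h] at hη
  obtain ⟨Z, hZ⟩ := h
  have nn : ∀ a : WithBot ℝ≥0∞, a ≠ ⊥ → 0 ≤ a := by
    intro a ha
    obtain ⟨b, rfl⟩ := WithBot.ne_bot_iff_exists.mp ha
    exact WithBot.coe_le_coe.mpr (zero_le)
  have h1 : 0 ≤ N Z := nn _ (fun h => hZ (by simp [h]))
  have h2 : 0 ≤ M Z := nn _ (fun h => hZ (by simp [h]))
  refine ⟨Z, fun Y => le_antisymm ?_ ?_⟩
  · exact (le_add_of_nonneg_right h1).trans (hε Y Z)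
  · exact (le_add_of_nonneg_right h2).trans (hM Z Y)
end

section
/- Let V be a category with (small) coproducts, A : ι → V a family of objects, and w : ∀ i, A i ⟶ B a family of morphisms such that the induced map w̄ : ∐ A ⟶ B is a regular epimorphism. Assume moreover that for every parallel pair x, y : D ⟶ ∐ A, the family F_{x,y} of all morphisms p : P ⟶ D for which there exist indices i, j and maps p_i : P ⟶ A i, p_j : P ⟶ A j with x ∘ p = ι_i ∘ p_i and y ∘ p = ι_j ∘ p_j (ι denoting coproduct injections) is jointly epic. Then the family {w_i} is jointly regular epi: it is a quotient of its kernel relation, i.e. for every object C and family f : ∀ i, A i ⟶ C such that for every object P, indices i, j, and maps p_i : P ⟶ A i, p_j : P ⟶ A j with p_i ≫ w i = p_j ≫ w j one has p_i ≫ f i = p_j ≫ f j, there exists a unique h : B ⟶ C with w i ≫ h = f i for all i. -/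
open CategoryTheory Limits

universe w v u

/-- If the cotuple `∐ A ⟶ B` of a family `w i : A i ⟶ B` is a regular
epimorphism, and for every parallel pair `x, y : D ⟶ ∐ A` the family `F_{x,y}` of
maps `p : P ⟶ D` factoring `x ∘ p` and `y ∘ p` through coproduct injections is
jointly epic, then the family `{w i}` is jointly regular epi, i.e. it is a
quotient (colimit cocone) of its kernel relation. -/
theorem regularEpi_family_quotient_of_kernel {V : Type u} [Category.{v} V]
    [HasCoproducts.{w} V] {ι : Type w}
    (A : ι → V) (B : V) (w : ∀ i, A i ⟶ B)
    (hreg : Nonempty (RegularEpi (Sigma.desc w)))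
    (hF : ∀ (D : V) (x y : D ⟶ ∐ A) (C : V) (u v : D ⟶ C),
      (∀ (P : V) (p : P ⟶ D),
        (∃ (i j : ι) (pi : P ⟶ A i) (pj : P ⟶ A j),
          p ≫ x = pi ≫ Sigma.ι A i ∧ p ≫ y = pj ≫ Sigma.ι A j) →
          p ≫ u = p ≫ v) → u = v) :
    ∀ (C : V) (f : ∀ i, A i ⟶ C),
      (∀ (P : V) (i j : ι) (pi : P ⟶ A i) (pj : P ⟶ A j),
        pi ≫ w i = pj ≫ w j → pi ≫ f i = pj ≫ f j) →
        ∃! h : B ⟶ C, ∀ i, w i ≫ h = f i := by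
  intro C f hf
  obtain ⟨r⟩ := hreg
  have key : r.left ≫ Sigma.desc f = r.right ≫ Sigma.desc f := by
    apply hF r.W r.left r.right
    rintro P p ⟨i, j, pi, pj, h1, h2⟩
    have e : pi ≫ w i = pj ≫ w j := by
      have h3 : (p ≫ r.left) ≫ Sigma.desc w = (p ≫ r.right) ≫ Sigma.desc w := by
        rw [Category.assoc, Category.assoc, r.w]
      rw [h1, h2] at h3
      simpa using h3
    have h4 := hf P i j pi pj e
    rw [← Category.assoc, ← Category.assoc, h1, h2]
    simpa using h4
  obtain ⟨h, hh, hu⟩ := Cofork.IsColimit.existsUnique r.isColimit (Sigma.desc f) key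
  have hh' : Sigma.desc w ≫ h = Sigma.desc f := hh
  refine ⟨h, fun i => ?_, fun k hk => hu k ?_⟩
  · have h5 := congrArg (fun t => Sigma.ι A i ≫ t) hh'
    simpa using h5
  · change Sigma.desc w ≫ k = Sigma.desc f
    apply Sigma.hom_ext
    intro i
    simpa using hk i
end
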